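/- Let c > 0, let t₀ ∈ ℝ, and let Y : ℝ → EuclideanSpace ℝ (Fin 3) be a differentiable unit-speed curve on the unit sphere, i.e. ‖Y(t)‖ = 1 and ‖Y'(t)‖ = 1 for all t. Define β(t) = c·sec(t + t₀)·Y(t) on an open interval where cos(t + t₀) > 0. Then for all t in that interval: (a) ‖β'(t)‖ = c·sec²(t + t₀); and (b) the component of β(t) orthogonal to β'(t) has constant norm c, i.e. ‖β(t)‖² − (⟨β(t), β'(t)⟩²)/‖β'(t)‖² = c². -/

import Mathlib

open Real RealInnerProductSpace

/-- A curve of constant norm is orthogonal to its derivative. -/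
theorem HasDerivAt.inner_eq_zero_of_norm_eq {E : Type*} [NormedAddCommGroup E]
    [InnerProductSpace ℝ E] {Y : ℝ → E} {y' : E} {t r : ℝ}
    (h : HasDerivAt Y y' t) (hY : ∀ u, ‖Y u‖ = r) : ⟪Y t, y'⟫ = 0 := by
  have hsq := h.norm_sq
  simp only [hY] at hsq
  have := hsq.unique (hasDerivAt_const t (r ^ 2))
  linarith

/-- The derivative of `u ↦ c * sec (u + t₀)`. -/
theorem hasDerivAt_const_div_cos_add (c t₀ : ℝ) {t : ℝ} (ht : cos (t + t₀) ≠ 0) :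
    HasDerivAt (fun u => c / cos (u + t₀)) (c * sin (t + t₀) / cos (t + t₀) ^ 2) t := by
  have hcos : HasDerivAt (fun u => cos (u + t₀)) (-sin (t + t₀)) t :=
    (hasDerivAt_cos (t + t₀)).comp_add_const t t₀
  exact ((hasDerivAt_const t c).fun_div hcos ht).congr_deriv (by ring)

theorem stmt_14
    (c t₀ : ℝ) (hc : 0 < c)
    (Y Y' : ℝ → EuclideanSpace ℝ (Fin 3))
    (hY : ∀ t, ‖Y t‖ = 1)
    (hY' : ∀ t, HasDerivAt Y (Y' t) t)
    (hY'unit : ∀ t, ‖Y' t‖ = 1) :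
    ∀ t, Real.cos (t + t₀) > 0 →
      ∃ v : EuclideanSpace ℝ (Fin 3),
        HasDerivAt (fun u => (c / Real.cos (u + t₀)) • Y u) v t ∧
        ‖v‖ = c / Real.cos (t + t₀) ^ 2 ∧
        ‖(c / Real.cos (t + t₀)) • Y t‖ ^ 2 -
          (⟪(c / Real.cos (t + t₀)) • Y t, v⟫) ^ 2 / ‖v‖ ^ 2 = c ^ 2 := by
  intro t ht
  have horth : ⟪Y t, Y' t⟫ = 0 := (hY' t).inner_eq_zero_of_norm_eq hY
  have hderiv := (hasDerivAt_const_div_cos_add c t₀ ht.ne').fun_smul (hY' t)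
  have hsin : sin (t + t₀) ^ 2 = 1 - cos (t + t₀) ^ 2 := sin_sq _
  refine ⟨_, hderiv, ?_⟩
  generalize cos (t + t₀) = k at *
  generalize sin (t + t₀) = s at *
  have hnorm : ‖(c / k) • Y' t + (c * s / k ^ 2) • Y t‖ = c / k ^ 2 := by
    rw [← sq_eq_sq₀ (norm_nonneg _) (by positivity), norm_add_sq_real, inner_smul_left,
      inner_smul_right, real_inner_comm, horth, norm_smul, norm_smul, hY, hY'unit]
    simp only [mul_one, mul_zero, add_zero, norm_eq_abs, sq_abs]
    field_simp
    rw [hsin]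
    ring
  refine ⟨hnorm, ?_⟩
  rw [hnorm, inner_add_right, inner_smul_left, inner_smul_left, inner_smul_right,
    inner_smul_right, horth, real_inner_self_eq_norm_sq, norm_smul, hY]
  simp only [mul_one, mul_zero, zero_add, one_pow, norm_eq_abs, sq_abs, conj_trivial]
  field_simp
  rw [hsin]
  ring
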